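/- Consider F(x) = f(x) + P₁(x) − P₂(x) with P₂ having globally Lipschitz gradient, and define E(x, y, w) = f(x) + P₁(x) − ⟨x, y⟩ + P₂*(y) + (L/2)‖x − w‖². If F is a KL function with exponent 1/2, then E is a KL function with exponent 1/2. -/

import Mathlib

/-!
The limiting subdifferential of the potential `E` is contained in an explicit set: if
`(ξ, η, ζ) ∈ ∂E(x, y, w)` and `E(x, y, w)` is finite, then
`ξ - ∇f(x) + y - L(x - w) ∈ ∂P₁(x)`, `y = ∇P₂(x + η)` and `ζ = L(w - x)`
(`IsStat`, `IsStat.of_mem_limSubdiff`). For Fréchet subgradients this follows by testing along rays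
in each of the three blocks (`FrechetSubgradAt.inner_le_of_ray`), and the three conditions are
closed under limits.

The KL inequality with exponent `1/2` is equivalent to a local bound `h(p) - h(p₀) ≤ C‖v‖²` for all
`v ∈ ∂h(p)`. To prove it for `E` at `p₀ = (x₀, y₀, w₀)` there are two cases.

* If `w₀ = x₀` and `y₀ = ∇P₂(x₀)`, then `E(p₀) = F(x₀)` and
  `E(p) - E(p₀) = (F(x) - F(x₀)) + (P₂(x) + P₂*(y) - ⟨x, y⟩) + (L/2)‖x - w‖²`.
  The last two terms are nonnegative; the second is at most `ℓ‖η‖²` and the third equals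
  `‖ζ‖²/(2L)`. The first is controlled by the KL inequality of `F`, because
  `ξ + ζ + (y - ∇P₂(x)) ∈ ∂F(x)` has norm at most `‖ξ‖ + ‖ζ‖ + ℓ‖η‖`.
* Otherwise `L‖w - x‖ + ‖y - ∇P₂(x)‖` is bounded away from `0` near `p₀`, and it is at most
  `(1 + ℓ)‖v‖`, so subgradients are bounded away from `0` there.
-/

open Filter Topology Set Metric Bornology
open scoped RealInnerProductSpace

noncomputable section

abbrev Eucl (n : ℕ) := EuclideanSpace ℝ (Fin n)

variable {H : Type*} [NormedAddCommGroup H] [InnerProductSpace ℝ H]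

/-- Fréchet (regular) subgradient of an extended-real-valued function. -/
def FrechetSubgradAt (h : H → EReal) (v x : H) : Prop :=
  ∀ ε : ℝ, 0 < ε →
    ∀ᶠ y in 𝓝[≠] x, h x + ((⟪v, y - x⟫ - ε * ‖y - x‖ : ℝ) : EReal) ≤ h y

/-- Limiting (Mordukhovich) subdifferential. -/
def limSubdiff (h : H → EReal) (x : H) : Set H :=
  {v | ∃ xs vs : ℕ → H,
    Tendsto xs atTop (𝓝 x) ∧
    Tendsto (fun k => h (xs k)) atTop (𝓝 (h x)) ∧
    Tendsto vs atTop (𝓝 v) ∧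
    ∀ k, FrechetSubgradAt h (vs k) (xs k)}

/-- Convex subgradient of a real-valued function. -/
def ConvexSubgradAt (g : H → ℝ) (v x : H) : Prop :=
  ∀ y, g x + ⟪v, y - x⟫ ≤ g y

/-- Convex subgradient of an extended-real-valued function. -/
def ConvexSubgradAtE (g : H → EReal) (v x : H) : Prop :=
  ∀ y, g x + ((⟪v, y - x⟫ : ℝ) : EReal) ≤ g y

/-- Convex conjugate of a real-valued function. -/
def conjE (g : H → ℝ) (y : H) : EReal :=
  ⨆ x : H, ((⟪x, y⟫ - g x : ℝ) : EReal)

/-- `P` is proper, closed (lsc) and convex. -/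
def ProperClosedConvexE (P : H → EReal) : Prop :=
  (∀ x, P x ≠ ⊥) ∧ (∃ x, P x ≠ ⊤) ∧ LowerSemicontinuous P ∧
  (∀ x y : H, ∀ t : ℝ, t ∈ Ioo (0:ℝ) 1 →
    P (t • x + (1 - t) • y) ≤ (t : EReal) * P x + ((1 - t : ℝ) : EReal) * P y)

/-- KL property with exponent `α` at a point. -/
def KLExpAt (h : H → EReal) (α : ℝ) (x₀ : H) : Prop :=
  ∃ c > (0:ℝ), ∃ ε > (0:ℝ), ∃ a > (0:ℝ), ∀ x : H,
    ‖x - x₀‖ ≤ ε → h x₀ < h x → h x < h x₀ + (a : EReal) →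
    (limSubdiff h x).Nonempty →
    1 ≤ c * (1 - α) * ((h x).toReal - (h x₀).toReal) ^ (-α) * infDist 0 (limSubdiff h x)

/-- KL function with exponent `α`. -/
def IsKLWithExp (h : H → EReal) (α : ℝ) : Prop :=
  ∀ x₀ : H, (limSubdiff h x₀).Nonempty → KLExpAt h α x₀

/-- KL property (general desingularizing function) at a point. -/
def KLAt (h : H → EReal) (x₀ : H) : Prop :=
  ∃ a > (0:ℝ), ∃ U ∈ 𝓝 x₀, ∃ φ φd : ℝ → ℝ,
    ContinuousOn φ (Ico 0 a) ∧ ConcaveOn ℝ (Ico 0 a) φ ∧ φ 0 = 0 ∧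
    (∀ s ∈ Ico (0:ℝ) a, 0 ≤ φ s) ∧
    (∀ s ∈ Ioo (0:ℝ) a, HasDerivAt φ (φd s) s ∧ 0 < φd s) ∧
    ∀ x ∈ U, h x₀ < h x → h x < h x₀ + (a : EReal) → (limSubdiff h x).Nonempty →
      1 ≤ φd ((h x).toReal - (h x₀).toReal) * infDist 0 (limSubdiff h x)

/-- KL function. -/
def IsKLFun (h : H → EReal) : Prop :=
  ∀ x₀ : H, (limSubdiff h x₀).Nonempty → KLAt h x₀

/-- The potential function `E(x,y,w) = f(x) + P₁(x) - ⟨x,y⟩ + P₂*(y) + L/2 ‖x-w‖²`. -/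
def potE (f : H → ℝ) (P₁ : H → EReal) (P₂ : H → ℝ) (L : ℝ) (x y w : H) : EReal :=
  ((f x : ℝ) : EReal) + P₁ x - ((⟪x, y⟫ : ℝ) : EReal) + conjE P₂ y
    + ((L / 2 * ‖x - w‖ ^ 2 : ℝ) : EReal)

/-- The pDCAe iteration: `ξ^{k+1} ∈ ∂P₂(x^k)`, `u^k = x^k + β_k (x^k - x^{k-1})` and
`x^{k+1}` is the minimizer of `⟨∇f(u^k) - ξ^{k+1}, ·⟩ + L/2 ‖· - u^k‖² + P₁(·)`.
(`x⁻¹ = x⁰` is encoded by truncated subtraction in `ℕ`.) -/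
def IsPDCAe (f' : H → H) (P₁ : H → EReal) (P₂ : H → ℝ) (L : ℝ) (β : ℕ → ℝ)
    (x ξ : ℕ → H) : Prop :=
  P₁ (x 0) ≠ ⊤ ∧
  (∀ k : ℕ, ConvexSubgradAt P₂ (ξ (k + 1)) (x k)) ∧
  (∀ k : ℕ, ∀ z : H,
    ((⟪f' (x k + β k • (x k - x (k - 1))) - ξ (k + 1), x (k + 1)⟫
        + L / 2 * ‖x (k + 1) - (x k + β k • (x k - x (k - 1)))‖ ^ 2 : ℝ) : EReal)
      + P₁ (x (k + 1))
      ≤ ((⟪f' (x k + β k • (x k - x (k - 1))) - ξ (k + 1), z⟫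
        + L / 2 * ‖z - (x k + β k • (x k - x (k - 1)))‖ ^ 2 : ℝ) : EReal) + P₁ z)

/-- Triples `(x, y, w)` with the ℓ² product inner product structure. -/
abbrev Trip (n : ℕ) := WithLp 2 (Eucl n × WithLp 2 (Eucl n × Eucl n))

def mkTrip {n : ℕ} (a b c : Eucl n) : Trip n :=
  (WithLp.equiv 2 _).symm (a, (WithLp.equiv 2 _).symm (b, c))

/-- `potE` as a function on triples. -/
def potE3 {n : ℕ} (f : Eucl n → ℝ) (P₁ : Eucl n → EReal) (P₂ : Eucl n → ℝ) (L : ℝ)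
    (p : Trip n) : EReal :=
  potE f P₁ P₂ L ((WithLp.equiv 2 _) p).1 ((WithLp.equiv 2 _) ((WithLp.equiv 2 _) p).2).1
    ((WithLp.equiv 2 _) ((WithLp.equiv 2 _) p).2).2

/-! ### Rays, gradients and conjugates -/

/-- A Fréchet subgradient is tested along a ray: a differentiable majorant of `h` on the ray that
is exact at the base point has slope at least `⟪v, d⟫`. -/
lemma FrechetSubgradAt.inner_le_of_ray {h : H → EReal} {v p : H} (hv : FrechetSubgradAt h v p)
    (d : H) (φ : ℝ → ℝ) (φ' : ℝ) (hφ : HasDerivAt φ φ' 0) (h0 : h p = (φ 0 : EReal))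
    (hle : ∀ t ∈ Ioo (0:ℝ) 1, h (p + t • d) ≤ (φ t : EReal)) : ⟪v, d⟫ ≤ φ' := by
  have key : ∀ ε : ℝ, 0 < ε → ⟪v, d⟫ - ε * ‖d‖ ≤ φ' := by
    intro ε hε
    have h1 : ∀ᶠ y in 𝓝 p, h p + ((⟪v, y - p⟫ - ε * ‖y - p‖ : ℝ) : EReal) ≤ h y := by
      have h2 := hv ε hε
      rw [eventually_nhdsWithin_iff] at h2
      filter_upwards [h2] with y hy
      by_cases hyp : y = p
      · subst hyp
        simp
      · exact hy hyp
    have ht : Tendsto (fun t : ℝ => p + t • d) (𝓝[>] 0) (𝓝 p) := by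
      have : Continuous (fun t : ℝ => p + t • d) := by fun_prop
      have h3 := this.tendsto 0
      simp only [zero_smul, add_zero] at h3
      exact h3.mono_left nhdsWithin_le_nhds
    refine ge_of_tendsto hφ.tendsto_slope_zero_right ?_
    filter_upwards [ht.eventually h1, Ioo_mem_nhdsGT (show (0:ℝ) < 1 by norm_num)] with t h4 h5
    have h6 := h4.trans (hle t h5)
    rw [h0] at h6
    have h7 : φ 0 + (⟪v, p + t • d - p⟫ - ε * ‖p + t • d - p‖) ≤ φ t := by exact_mod_cast h6
    rw [add_sub_cancel_left, inner_smul_right, norm_smul, Real.norm_of_nonneg h5.1.le] at h7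
    rw [zero_add, smul_eq_mul, inv_mul_eq_div, le_div_iff₀ h5.1]
    linarith
  by_contra! hcon
  have hd : 0 < ‖d‖ + 1 := by positivity
  have h8 := key ((⟪v, d⟫ - φ') / (‖d‖ + 1)) (div_pos (by linarith) hd)
  have h9 : (⟪v, d⟫ - φ') / (‖d‖ + 1) * ‖d‖ < ⟪v, d⟫ - φ' := by
    rw [div_mul_eq_mul_div, div_lt_iff₀ hd]
    nlinarith
  linarith

lemma HasGradientAt.hasDerivAt_ray [CompleteSpace H] {g : H → ℝ} {g' x : H}
    (hg : HasGradientAt g g' x) (d : H) :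
    HasDerivAt (fun t : ℝ => g (x + t • d)) ⟪g', d⟫ 0 := by
  have := hg.hasFDerivAt.hasLineDerivAt d
  simpa [HasLineDerivAt] using this

lemma ConvexOn.add_inner_le [CompleteSpace H] {g : H → ℝ} {g' x : H} (hc : ConvexOn ℝ univ g)
    (hg : HasGradientAt g g' x) (d : H) : g x + ⟪g', d⟫ ≤ g (x + d) := by
  have hφ : ConvexOn ℝ univ (fun t : ℝ => g (x + t • d)) := by
    refine ⟨convex_univ, fun s _ t _ a b ha hb hab => ?_⟩
    have h := hc.2 (mem_univ (x + s • d)) (mem_univ (x + t • d)) ha hb hab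
    have e : a • (x + s • d) + b • (x + t • d) = x + (a • s + b • t) • d := by
      have : x = (a + b) • x := by rw [hab, one_smul]
      conv_rhs => rw [this]
      simp only [smul_eq_mul]
      module
    rw [e] at h
    exact h
  have h := hφ.le_slope_of_hasDerivAt (mem_univ 0) (mem_univ 1) zero_lt_one (hg.hasDerivAt_ray d)
  simp only [slope_def_field, one_smul, zero_smul, add_zero, sub_zero, div_one] at h
  linarith

lemma conjE_ne_bot (g : H → ℝ) (y : H) : conjE g y ≠ ⊥ := by
  intro h
  have := le_iSup (fun x : H => ((⟪x, y⟫ - g x : ℝ) : EReal)) 0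
  change _ ≤ conjE g y at this
  rw [h] at this
  exact EReal.coe_ne_bot _ (le_bot_iff.mp this)

lemma le_conjE (g : H → ℝ) (x y : H) : ((⟪x, y⟫ - g x : ℝ) : EReal) ≤ conjE g y :=
  le_iSup (fun x : H => ((⟪x, y⟫ - g x : ℝ) : EReal)) x

lemma conjE_le_segment (g : H → ℝ) {y y' : H} {b b' : ℝ} (hb : conjE g y = (b : EReal))
    (hb' : conjE g y' = (b' : EReal)) {t : ℝ} (ht : t ∈ Ioo (0:ℝ) 1) :
    conjE g (y + t • (y' - y)) ≤ (((1 - t) * b + t * b' : ℝ) : EReal) := by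
  refine iSup_le fun u => ?_
  have h1 := le_conjE g u y
  have h2 := le_conjE g u y'
  rw [hb] at h1
  rw [hb'] at h2
  have h1' : ⟪u, y⟫ - g u ≤ b := by exact_mod_cast h1
  have h2' : ⟪u, y'⟫ - g u ≤ b' := by exact_mod_cast h2
  norm_cast
  rw [inner_add_right, inner_smul_right, inner_sub_right]
  nlinarith [mul_le_mul_of_nonneg_left h1' (sub_nonneg.mpr ht.2.le),
    mul_le_mul_of_nonneg_left h2' ht.1.le]

/-- Equality in Fenchel–Young at a gradient. -/
lemma conjE_gradient [CompleteSpace H] {g : H → ℝ} {g' z : H} (hc : ConvexOn ℝ univ g)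
    (hg : HasGradientAt g g' z) : conjE g g' = ((⟪z, g'⟫ - g z : ℝ) : EReal) := by
  refine le_antisymm (iSup_le fun u => ?_) (le_conjE g z g')
  have h := hc.add_inner_le hg (u - z)
  rw [add_sub_cancel, inner_sub_right, real_inner_comm, real_inner_comm z] at h
  norm_cast
  linarith

/-- If `z` is a subgradient of `g*` at `y`, tested only against the point `∇g(z)`, then
`y = ∇g(z)`: the inequality says that `z` minimizes `g - ⟪·, y⟫`. -/
lemma eq_gradient_of_conjE [CompleteSpace H] {g : H → ℝ} {g' z y : H} {b : ℝ}
    (hg : HasGradientAt g g' z) (hb : conjE g y = (b : EReal))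
    (h : b + ⟪z, g' - y⟫ ≤ ⟪z, g'⟫ - g z) : y = g' := by
  have hmin : ∀ u, ⟪u, y⟫ - g u ≤ ⟪z, y⟫ - g z := by
    intro u
    have h1 := le_conjE g u y
    rw [hb] at h1
    have h1' : ⟪u, y⟫ - g u ≤ b := by exact_mod_cast h1
    rw [inner_sub_right] at h
    linarith
  have hd : HasDerivAt (fun t : ℝ => g (z + t • (y - g')) - (⟪z, y⟫ + t * ⟪y - g', y⟫))
      (⟪g', y - g'⟫ - ⟪y - g', y⟫) 0 := by
    have h2 : HasDerivAt (fun t : ℝ => ⟪z, y⟫ + t * ⟪y - g', y⟫) (⟪y - g', y⟫) 0 := by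
      simpa using ((hasDerivAt_id (0:ℝ)).mul_const (⟪y - g', y⟫)).const_add (⟪z, y⟫)
    exact (hg.hasDerivAt_ray (y - g')).sub h2
  have hloc : IsLocalMin (fun t : ℝ => g (z + t • (y - g')) - (⟪z, y⟫ + t * ⟪y - g', y⟫)) 0 := by
    refine Filter.Eventually.of_forall fun t => ?_
    have h3 := hmin (z + t • (y - g'))
    rw [inner_add_left, inner_smul_left] at h3
    simp only [zero_smul, add_zero, zero_mul]
    simp only [conj_trivial] at h3
    linarith
  have h4 := hloc.hasDerivAt_eq_zero hd
  have h5 : ⟪y - g', y - g'⟫ = 0 := by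
    rw [inner_sub_right, real_inner_comm g' (y - g')]
    linarith
  exact sub_eq_zero.mp (inner_self_eq_zero.mp h5)

/-! ### Subgradients of convex extended-real functions -/

lemma ProperClosedConvexE.le_segment {P : H → EReal} (hP : ProperClosedConvexE P) {x d : H}
    {a b : ℝ} (ha : P x = (a : EReal)) (hb : P (x + d) = (b : EReal)) {t : ℝ}
    (ht : t ∈ Ioo (0:ℝ) 1) : P (x + t • d) ≤ (((1 - t) * a + t * b : ℝ) : EReal) := by
  have h := hP.2.2.2 (x + d) x t ht
  have e : t • (x + d) + (1 - t) • x = x + t • d := by module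
  rw [e, ha, hb] at h
  refine h.trans (le_of_eq ?_)
  norm_cast
  ring

lemma ConvexSubgradAtE.of_tendsto {P : H → EReal} (hP : ProperClosedConvexE P) {xs ss : ℕ → H}
    {x s : H} (hx : Tendsto xs atTop (𝓝 x)) (hs : Tendsto ss atTop (𝓝 s))
    (h : ∀ᶠ k in atTop, ConvexSubgradAtE P (ss k) (xs k)) : ConvexSubgradAtE P s x := by
  intro z
  by_cases hz : P z = ⊤
  · rw [hz]
    exact le_top
  obtain ⟨r, hr⟩ : ∃ r : ℝ, P z = (r : EReal) :=
    ⟨_, (EReal.coe_toReal hz (hP.1 z)).symm⟩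
  have hb : Tendsto (fun k => r - ⟪ss k, z - xs k⟫) atTop (𝓝 (r - ⟪s, z - x⟫)) :=
    tendsto_const_nhds.sub (hs.inner (tendsto_const_nhds.sub hx))
  have hle : P x ≤ ((r - ⟪s, z - x⟫ : ℝ) : EReal) := by
    by_contra! hcon
    obtain ⟨m, hm1, hm2⟩ := EReal.lt_iff_exists_real_btwn.mp hcon
    have hm1' : r - ⟪s, z - x⟫ < m := by exact_mod_cast hm1
    have h1 := hx.eventually (hP.2.2.1 x m hm2)
    have h2 := hb.eventually (gt_mem_nhds hm1')
    obtain ⟨k, h3, h4, h5⟩ := (h1.and (h2.and h)).exists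
    have h6 := h5 z
    rw [hr] at h6
    have hfin : P (xs k) ≠ ⊤ := by
      intro ht
      rw [ht, EReal.top_add_coe] at h6
      exact EReal.coe_ne_top _ (top_le_iff.mp h6)
    obtain ⟨q, hq⟩ : ∃ q : ℝ, P (xs k) = (q : EReal) :=
      ⟨_, (EReal.coe_toReal hfin (hP.1 _)).symm⟩
    rw [hq] at h6 h3
    have h6' : q + ⟪ss k, z - xs k⟫ ≤ r := by exact_mod_cast h6
    have h3' : m < q := by exact_mod_cast h3
    linarith
  rw [hr]
  calc P x + ((⟪s, z - x⟫ : ℝ) : EReal)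
      ≤ ((r - ⟪s, z - x⟫ : ℝ) : EReal) + ((⟪s, z - x⟫ : ℝ) : EReal) := by gcongr
    _ = (r : EReal) := by
      norm_cast
      ring

/-- The sum rule inclusion `∂P₁ + ∇f - ∇P₂ ⊆ ∂(f + P₁ - P₂)`. -/
lemma mem_limSubdiff_F [CompleteSpace H] {f P₂ : H → ℝ} {P₁ : H → EReal} {s u v x : H}
    (hP : ∀ x, P₁ x ≠ ⊥) (hf : HasGradientAt f u x) (hP₂ : HasGradientAt P₂ v x)
    (hfin : P₁ x ≠ ⊤) (hs : ConvexSubgradAtE P₁ s x) :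
    s + u - v ∈ limSubdiff
      (fun y : H => ((f y : ℝ) : EReal) + P₁ y - ((P₂ y : ℝ) : EReal)) x := by
  refine ⟨fun _ => x, fun _ => s + u - v, tendsto_const_nhds, tendsto_const_nhds,
    tendsto_const_nhds, fun _ ε hε => ?_⟩
  refine Filter.Eventually.filter_mono nhdsWithin_le_nhds ?_
  have o1 := (hasGradientAt_iff_isLittleO.mp hf).def (half_pos hε)
  have o2 := (hasGradientAt_iff_isLittleO.mp hP₂).def (half_pos hε)
  filter_upwards [o1, o2] with y h1 h2
  by_cases hy : P₁ y = ⊤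
  · rw [hy, EReal.coe_add_top, EReal.top_sub_coe]
    exact le_top
  obtain ⟨a, ha⟩ : ∃ a : ℝ, P₁ x = (a : EReal) := ⟨_, (EReal.coe_toReal hfin (hP x)).symm⟩
  obtain ⟨b, hb⟩ : ∃ b : ℝ, P₁ y = (b : EReal) := ⟨_, (EReal.coe_toReal hy (hP y)).symm⟩
  have h3 := hs y
  rw [ha, hb] at h3
  have h3' : a + ⟪s, y - x⟫ ≤ b := by exact_mod_cast h3
  rw [Real.norm_eq_abs, abs_le] at h1 h2
  rw [ha, hb]
  norm_cast
  rw [inner_sub_left, inner_add_left]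
  linarith [h1.1, h2.2]

/-! ### The KL inequality with exponent `1/2` as a quadratic bound -/

lemma rpow_neg_half {g : ℝ} (hg : 0 ≤ g) : g ^ (-(1 / 2) : ℝ) = (√g)⁻¹ := by
  rw [Real.rpow_neg hg, Real.sqrt_eq_rpow]

lemma KLExpAt.quadratic_bound {h : H → EReal} {x₀ : H} (hKL : KLExpAt h (1 / 2) x₀) :
    ∃ C ≥ (0:ℝ), ∃ ε > (0:ℝ), ∃ a > (0:ℝ), ∀ x : H, ‖x - x₀‖ ≤ ε → h x₀ < h x →
      h x < h x₀ + (a : EReal) → 0 < (h x).toReal - (h x₀).toReal → ∀ v ∈ limSubdiff h x,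
      (h x).toReal - (h x₀).toReal ≤ C * ‖v‖ ^ 2 := by
  obtain ⟨c, hc, ε, hε, a, ha, H1⟩ := hKL
  refine ⟨(c / 2) ^ 2, by positivity, ε, hε, a, ha, fun x hx h1 h2 hg v hv => ?_⟩
  have h3 := H1 x hx h1 h2 ⟨v, hv⟩
  set g := (h x).toReal - (h x₀).toReal
  have h4 : infDist 0 (limSubdiff h x) ≤ ‖v‖ := by
    simpa using infDist_le_dist_of_mem (x := (0 : H)) hv
  rw [rpow_neg_half hg.le] at h3
  have hs : 0 < √g := Real.sqrt_pos.mpr hg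
  have h5 : √g ≤ c / 2 * ‖v‖ := by
    have h6 : 1 ≤ c * (1 - 1 / 2) * (√g)⁻¹ * ‖v‖ := h3.trans (by gcongr)
    have h7 : c * (1 - 1 / 2) * (√g)⁻¹ * ‖v‖ = (c / 2 * ‖v‖) / √g := by
      field_simp
      ring
    rw [h7, le_div_iff₀ hs] at h6
    linarith
  calc g = √g ^ 2 := (Real.sq_sqrt hg.le).symm
    _ ≤ (c / 2 * ‖v‖) ^ 2 := by gcongr
    _ = (c / 2) ^ 2 * ‖v‖ ^ 2 := by ring

lemma KLExpAt.of_quadratic_bound {h : H → EReal} {x₀ : H} (hbot : ∀ x, h x ≠ ⊥) {C ε a : ℝ}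
    (hC : 0 < C) (hε : 0 < ε) (ha : 0 < a)
    (H1 : ∀ x : H, ‖x - x₀‖ ≤ ε → h x ≠ ⊤ → 0 < (h x).toReal - (h x₀).toReal →
      (h x).toReal - (h x₀).toReal < a → ∀ v ∈ limSubdiff h x,
      (h x).toReal - (h x₀).toReal ≤ C * ‖v‖ ^ 2) : KLExpAt h (1 / 2) x₀ := by
  refine ⟨2 * √C, by positivity, ε, hε, a, ha, fun x hx h1 h2 hne => ?_⟩
  have hxt : h x ≠ ⊤ := ne_top_of_lt h2
  have hx₀t : h x₀ ≠ ⊤ := ne_top_of_lt h1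
  have e1 := EReal.coe_toReal hxt (hbot x)
  have e2 := EReal.coe_toReal hx₀t (hbot x₀)
  have h1' : (h x₀).toReal < (h x).toReal := by
    rw [← e1, ← e2] at h1
    exact_mod_cast h1
  have h2' : (h x).toReal < (h x₀).toReal + a := by
    rw [← e1, ← e2] at h2
    exact_mod_cast h2
  have H2 := H1 x hx hxt (by linarith) (by linarith)
  set g := (h x).toReal - (h x₀).toReal with hgdef
  have hg : 0 < g := by linarith
  have hs : 0 < √g := Real.sqrt_pos.mpr hg
  have hsC : 0 < √C := Real.sqrt_pos.mpr hC
  have h3 : √g / √C ≤ infDist 0 (limSubdiff h x) := by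
    refine (le_infDist hne).mpr fun v hv => ?_
    rw [dist_zero_left, div_le_iff₀ hsC, Real.sqrt_le_left (by positivity), mul_pow,
      Real.sq_sqrt hC.le]
    linarith [H2 v hv]
  rw [rpow_neg_half hg.le]
  calc (1:ℝ) = 2 * √C * (1 - 1 / 2) * (√g)⁻¹ * (√g / √C) := by
        field_simp
        norm_num
    _ ≤ _ := by
        gcongr

/-! ### Subgradients of the potential -/

lemma potE_eq {f : H → ℝ} {P₁ : H → EReal} {P₂ : H → ℝ} {L : ℝ} {x y w : H} {a b : ℝ}
    (ha : P₁ x = (a : EReal)) (hb : conjE P₂ y = (b : EReal)) :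
    potE f P₁ P₂ L x y w = ((f x + a - ⟪x, y⟫ + b + L / 2 * ‖x - w‖ ^ 2 : ℝ) : EReal) := by
  rw [potE, ha, hb]
  norm_cast

lemma potE_le {f : H → ℝ} {P₁ : H → EReal} {P₂ : H → ℝ} {L : ℝ} {x y w : H} {a b : ℝ}
    (ha : P₁ x ≤ (a : EReal)) (hb : conjE P₂ y ≤ (b : EReal)) :
    potE f P₁ P₂ L x y w ≤ ((f x + a - ⟪x, y⟫ + b + L / 2 * ‖x - w‖ ^ 2 : ℝ) : EReal) := by
  have : ((f x + a - ⟪x, y⟫ + b + L / 2 * ‖x - w‖ ^ 2 : ℝ) : EReal) =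
      ((f x : ℝ) : EReal) + (a : EReal) - ((⟪x, y⟫ : ℝ) : EReal) + (b : EReal)
        + ((L / 2 * ‖x - w‖ ^ 2 : ℝ) : EReal) := by norm_cast
  rw [potE, this]
  gcongr
  exact EReal.sub_le_sub (by gcongr) le_rfl

lemma potE_finite {f : H → ℝ} {P₁ : H → EReal} {P₂ : H → ℝ} {L : ℝ} {x y w : H}
    (hP : ∀ x, P₁ x ≠ ⊥) (h : potE f P₁ P₂ L x y w ≠ ⊤) :
    (∃ a : ℝ, P₁ x = (a : EReal)) ∧ ∃ b : ℝ, conjE P₂ y = (b : EReal) := by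
  have hy := conjE_ne_bot P₂ y
  have hx := hP x
  constructor
  · refine ⟨_, (EReal.coe_toReal (fun ht => h ?_) hx).symm⟩
    rw [potE, ht, EReal.coe_add_top, EReal.top_sub_coe, EReal.top_add_of_ne_bot hy,
      EReal.top_add_coe]
  · refine ⟨_, (EReal.coe_toReal (fun ht => h ?_) hy).symm⟩
    rw [potE, ht, EReal.add_top_of_ne_bot, EReal.top_add_coe]
    intro hb
    revert hb hx
    induction P₁ x with
    | bot => simp
    | top => simp
    | coe r =>
      intro _ hb
      norm_cast at hb

lemma potE_ne_bot {f : H → ℝ} {P₁ : H → EReal} {P₂ : H → ℝ} {L : ℝ} {x y w : H}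
    (hP : ∀ x, P₁ x ≠ ⊥) : potE f P₁ P₂ L x y w ≠ ⊥ := by
  intro h
  obtain ⟨⟨a, ha⟩, b, hb⟩ := potE_finite (f := f) (P₁ := P₁) (P₂ := P₂) (L := L) (x := x)
    (y := y) (w := w) hP (by rw [h]; exact bot_ne_top)
  rw [potE_eq ha hb] at h
  exact EReal.coe_ne_bot _ h

lemma Trip.inner_mkTrip {n : ℕ} (v : Trip n) (a b c : Eucl n) :
    ⟪v, mkTrip a b c⟫ = ⟪v.fst, a⟫ + (⟪v.snd.fst, b⟫ + ⟪v.snd.snd, c⟫) := rfl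

lemma potE3_add_smul {n : ℕ} (f : Eucl n → ℝ) (P₁ : Eucl n → EReal) (P₂ : Eucl n → ℝ) (L : ℝ)
    (p : Trip n) (t : ℝ) (a b c : Eucl n) :
    potE3 f P₁ P₂ L (p + t • mkTrip a b c) =
      potE f P₁ P₂ L (p.fst + t • a) (p.snd.fst + t • b) (p.snd.snd + t • c) := rfl

/-- The explicit conditions satisfied by a subgradient `v = (ξ, η, ζ)` of the potential at
`p = (x, y, w)`: `ξ - ∇f(x) + y - L(x - w) ∈ ∂P₁(x)`, `y = ∇P₂(x + η)` and `ζ = L(w - x)`. -/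
def IsStat {n : ℕ} (f' : Eucl n → Eucl n) (P₁ : Eucl n → EReal) (p₂' : Eucl n → Eucl n) (L : ℝ)
    (p v : Trip n) : Prop :=
  ConvexSubgradAtE P₁ (v.fst - f' p.fst + p.snd.fst - L • (p.fst - p.snd.snd)) p.fst ∧
  p.snd.fst = p₂' (p.fst + v.snd.fst) ∧
  v.snd.snd = L • (p.snd.snd - p.fst)

lemma hasDerivAt_half_norm_sq (L : ℝ) (u d : H) :
    HasDerivAt (fun t : ℝ => L / 2 * ‖u + t • d‖ ^ 2) (L * ⟪u, d⟫) 0 := by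
  have h1 : HasDerivAt (fun t : ℝ => u + t • d) d 0 := by
    simpa using ((hasDerivAt_id (0:ℝ)).smul_const d).const_add u
  have h2 := (h1.norm_sq).const_mul (L / 2)
  refine h2.congr_deriv ?_
  rw [zero_smul, add_zero]
  ring

lemma IsStat.of_frechet {n : ℕ} {f : Eucl n → ℝ} {f' : Eucl n → Eucl n} {P₁ : Eucl n → EReal}
    {P₂ : Eucl n → ℝ} {p₂' : Eucl n → Eucl n} {L : ℝ}
    (hfgrad : ∀ y, HasGradientAt f (f' y) y) (hP₁ : ProperClosedConvexE P₁)
    (hP₂conv : ConvexOn ℝ Set.univ P₂) (hP₂grad : ∀ y, HasGradientAt P₂ (p₂' y) y)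
    {p v : Trip n} (hv : FrechetSubgradAt (potE3 f P₁ P₂ L) v p)
    (hp : potE3 f P₁ P₂ L p ≠ ⊤) : IsStat f' P₁ p₂' L p v := by
  obtain ⟨⟨a, ha⟩, b, hb⟩ := potE_finite (x := p.fst) (y := p.snd.fst) (w := p.snd.snd) hP₁.1 hp
  have h0 := potE_eq (f := f) (L := L) (w := p.snd.snd) ha hb
  change potE3 f P₁ P₂ L p = _ at h0
  refine ⟨fun z => ?_, ?_, ?_⟩
  · by_cases hz : P₁ z = ⊤
    · rw [hz]
      exact le_top
    obtain ⟨r, hr⟩ : ∃ r : ℝ, P₁ z = (r : EReal) := ⟨_, (EReal.coe_toReal hz (hP₁.1 z)).symm⟩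
    obtain ⟨d, rfl⟩ : ∃ d, z = p.fst + d := ⟨z - p.fst, by abel⟩
    have hd : HasDerivAt (fun t : ℝ => f (p.fst + t • d) + ((1 - t) * a + t * r)
        - ⟪p.fst + t • d, p.snd.fst⟫ + b + L / 2 * ‖p.fst - p.snd.snd + t • d‖ ^ 2)
        (⟪f' p.fst, d⟫ + (r - a) - ⟪d, p.snd.fst⟫ + L * ⟪p.fst - p.snd.snd, d⟫) 0 := by
      have d1 := (hfgrad p.fst).hasDerivAt_ray d
      have d2 : HasDerivAt (fun t : ℝ => (1 - t) * a + t * r) (r - a) 0 := by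
        have := (((hasDerivAt_id (0:ℝ)).const_sub 1).mul_const a).add
          ((hasDerivAt_id (0:ℝ)).mul_const r)
        exact this.congr_deriv (by ring)
      have d3 : HasDerivAt (fun t : ℝ => ⟪p.fst + t • d, p.snd.fst⟫) ⟪d, p.snd.fst⟫ 0 := by
        have : (fun t : ℝ => ⟪p.fst + t • d, p.snd.fst⟫) =
            fun t : ℝ => ⟪p.fst, p.snd.fst⟫ + t * ⟪d, p.snd.fst⟫ := by
          funext t
          rw [inner_add_left, real_inner_smul_left]
        rw [this]
        simpa using ((hasDerivAt_id (0:ℝ)).mul_const ⟪d, p.snd.fst⟫).const_add ⟪p.fst, p.snd.fst⟫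
      exact (((d1.add d2).sub d3).add_const b).add (hasDerivAt_half_norm_sq L _ d)
    have h := hv.inner_le_of_ray (mkTrip d 0 0) _ _ hd (by rw [h0]; simp) (fun t ht => by
      rw [potE3_add_smul]
      have := potE_le (f := f) (L := L) (w := p.snd.snd) (hP₁.le_segment ha hr ht) hb.le
      simp only [smul_zero, add_zero]
      rwa [add_sub_right_comm p.fst] at this)
    rw [Trip.inner_mkTrip] at h
    simp only [inner_zero_right, add_zero] at h
    rw [ha, hr]
    norm_cast
    rw [add_sub_cancel_left, inner_sub_left, inner_add_left, inner_sub_left,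
      real_inner_smul_left]
    rw [real_inner_comm p.snd.fst d] at h
    linarith
  · have hb' := conjE_gradient hP₂conv (hP₂grad (p.fst + v.snd.fst))
    refine eq_gradient_of_conjE (hP₂grad (p.fst + v.snd.fst)) hb ?_
    set y' := p₂' (p.fst + v.snd.fst)
    set b' := ⟪p.fst + v.snd.fst, y'⟫ - P₂ (p.fst + v.snd.fst)
    have hd : HasDerivAt (fun t : ℝ => f p.fst + a - (⟪p.fst, p.snd.fst⟫
        + t * ⟪p.fst, y' - p.snd.fst⟫) + ((1 - t) * b + t * b')
        + L / 2 * ‖p.fst - p.snd.snd‖ ^ 2)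
        (-⟪p.fst, y' - p.snd.fst⟫ + (b' - b)) 0 := by
      have := (((((hasDerivAt_id (0:ℝ)).mul_const ⟪p.fst, y' - p.snd.fst⟫).const_add
        ⟪p.fst, p.snd.fst⟫).const_sub (f p.fst + a)).add
        ((((hasDerivAt_id (0:ℝ)).const_sub 1).mul_const b).add
          ((hasDerivAt_id (0:ℝ)).mul_const b'))).add_const (L / 2 * ‖p.fst - p.snd.snd‖ ^ 2)
      exact this.congr_deriv (by ring)
    have h := hv.inner_le_of_ray (mkTrip 0 (y' - p.snd.fst) 0) _ _ hd (by rw [h0]; simp)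
      (fun t ht => by
        rw [potE3_add_smul]
        have := potE_le (f := f) (L := L) (w := p.snd.snd) ha.le (conjE_le_segment P₂ hb hb' ht)
        simp only [smul_zero, add_zero]
        rwa [inner_add_right, real_inner_smul_right] at this)
    rw [Trip.inner_mkTrip] at h
    simp only [inner_zero_right, add_zero, zero_add] at h
    rw [inner_add_left]
    linarith
  · set e := v.snd.snd - L • (p.snd.snd - p.fst) with he
    have hd : HasDerivAt (fun t : ℝ => f p.fst + a - ⟪p.fst, p.snd.fst⟫ + b
        + L / 2 * ‖p.fst - p.snd.snd + t • (-e)‖ ^ 2) (L * ⟪p.fst - p.snd.snd, -e⟫) 0 :=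
      (hasDerivAt_half_norm_sq L _ (-e)).const_add _
    have h := hv.inner_le_of_ray (mkTrip 0 0 e) _ _ hd (by rw [h0]; simp)
      (fun t _ => by
        rw [potE3_add_smul]
        have := potE_le (f := f) (L := L) (w := p.snd.snd + t • e) ha.le hb.le
        simp only [smul_zero, add_zero]
        have e2 : p.fst - (p.snd.snd + t • e) = p.fst - p.snd.snd + t • (-e) := by module
        rwa [e2] at this)
    rw [Trip.inner_mkTrip] at h
    simp only [inner_zero_right, zero_add] at h
    have h2 : ⟪e, e⟫ ≤ 0 := by
      have h3 : ⟪e, e⟫ = ⟪v.snd.snd, e⟫ - L * ⟪p.fst - p.snd.snd, -e⟫ := by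
        rw [inner_neg_right, ← neg_sub p.snd.snd p.fst, inner_neg_left, neg_neg,
          ← real_inner_smul_left, ← inner_sub_left]
      linarith
    exact sub_eq_zero.mp (inner_self_eq_zero.mp (le_antisymm h2 real_inner_self_nonneg))

lemma IsStat.of_mem_limSubdiff {n : ℕ} {f : Eucl n → ℝ} {f' : Eucl n → Eucl n}
    {P₁ : Eucl n → EReal} {P₂ : Eucl n → ℝ} {p₂' : Eucl n → Eucl n} {L : ℝ}
    (hfgrad : ∀ y, HasGradientAt f (f' y) y) (hf' : Continuous f')
    (hP₁ : ProperClosedConvexE P₁) (hP₂conv : ConvexOn ℝ Set.univ P₂)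
    (hP₂grad : ∀ y, HasGradientAt P₂ (p₂' y) y) (hp₂' : Continuous p₂')
    {p v : Trip n} (hv : v ∈ limSubdiff (potE3 f P₁ P₂ L) p)
    (hp : potE3 f P₁ P₂ L p ≠ ⊤) : IsStat f' P₁ p₂' L p v := by
  obtain ⟨xs, vs, hxs, hE, hvs, hF⟩ := hv
  have hst : ∀ᶠ k in atTop, IsStat f' P₁ p₂' L (xs k) (vs k) := by
    filter_upwards [hE.eventually (gt_mem_nhds (lt_top_iff_ne_top.mpr hp))] with k hk
    exact IsStat.of_frechet hfgrad hP₁ hP₂conv hP₂grad (hF k) (ne_top_of_lt hk)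
  have c1 : Continuous (fun q : Trip n => q.fst) := WithLp.continuous_fst ..
  have c2 : Continuous (fun q : Trip n => q.snd.fst) :=
    (WithLp.continuous_fst ..).comp (WithLp.continuous_snd ..)
  have c3 : Continuous (fun q : Trip n => q.snd.snd) :=
    (WithLp.continuous_snd ..).comp (WithLp.continuous_snd ..)
  have x1 := (c1.tendsto p).comp hxs
  have x2 := (c2.tendsto p).comp hxs
  have x3 := (c3.tendsto p).comp hxs
  have v1 := (c1.tendsto v).comp hvs
  have v2 := (c2.tendsto v).comp hvs
  have v3 := (c3.tendsto v).comp hvs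
  refine ⟨?_, ?_, ?_⟩
  · exact ConvexSubgradAtE.of_tendsto hP₁ x1
      (((v1.sub ((hf'.tendsto _).comp x1)).add x2).sub ((x1.sub x3).const_smul L))
      (hst.mono fun k hk => hk.1)
  · exact tendsto_nhds_unique_of_eventuallyEq x2 ((hp₂'.tendsto _).comp (x1.add v2))
      (hst.mono fun k hk => hk.2.1)
  · exact tendsto_nhds_unique_of_eventuallyEq v3 ((x3.sub x1).const_smul L)
      (hst.mono fun k hk => hk.2.2)

lemma Trip.norm_le {n : ℕ} (v : Trip n) :
    ‖v.fst‖ ≤ ‖v‖ ∧ ‖v.snd.fst‖ ≤ ‖v‖ ∧ ‖v.snd.snd‖ ≤ ‖v‖ :=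
  ⟨WithLp.norm_fst_le _ v, (WithLp.norm_fst_le _ v.snd).trans (WithLp.norm_snd_le _ v),
    (WithLp.norm_snd_le _ v.snd).trans (WithLp.norm_snd_le _ v)⟩

lemma continuous_of_norm_sub_le {n : ℕ} {g : Eucl n → Eucl n} {K : ℝ} (hK : 0 ≤ K)
    (h : ∀ u v, ‖g u - g v‖ ≤ K * ‖u - v‖) : Continuous g := by
  have : LipschitzWith K.toNNReal g := LipschitzWith.of_dist_le_mul fun u v => by
    rw [dist_eq_norm, dist_eq_norm, Real.coe_toNNReal K hK]
    exact h u v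
  exact this.continuous

/-- Theorem 4.2(ii): if `F = f + P₁ - P₂` is a KL function with exponent `1/2`, then so is
the potential `E(x,y,w) = f(x) + P₁(x) - ⟨x,y⟩ + P₂*(y) + L/2‖x-w‖²`. -/
theorem KL_half_F_implies_KL_half_E
    {n : ℕ} (f : Eucl n → ℝ) (f' : Eucl n → Eucl n) (P₁ : Eucl n → EReal)
    (P₂ : Eucl n → ℝ) (p₂' : Eucl n → Eucl n) (L : ℝ)
    (hL : 0 < L)
    (hfconv : ConvexOn ℝ Set.univ f)
    (hfgrad : ∀ y, HasGradientAt f (f' y) y)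
    (hflip : ∀ y z, ‖f' y - f' z‖ ≤ L * ‖y - z‖)
    (hP₁ : ProperClosedConvexE P₁)
    (hP₂cont : Continuous P₂)
    (hP₂conv : ConvexOn ℝ Set.univ P₂)
    (hP₂grad : ∀ y, HasGradientAt P₂ (p₂' y) y)
    (hP₂lip : ∃ ℓ ≥ (0:ℝ), ∀ u v, ‖p₂' u - p₂' v‖ ≤ ℓ * ‖u - v‖)
    (hKL : IsKLWithExp
      (fun y : Eucl n => ((f y : ℝ) : EReal) + P₁ y - ((P₂ y : ℝ) : EReal)) (1 / 2)) :
    IsKLWithExp (potE3 f P₁ P₂ L) (1 / 2) := by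
  obtain ⟨ℓ, hℓ, hlip⟩ := hP₂lip
  have hf' := continuous_of_norm_sub_le hL.le hflip
  have hp₂' := continuous_of_norm_sub_le hℓ hlip
  have hbot : ∀ p, potE3 f P₁ P₂ L p ≠ ⊥ := fun p => potE_ne_bot hP₁.1
  have hstat : ∀ p v, v ∈ limSubdiff (potE3 f P₁ P₂ L) p → potE3 f P₁ P₂ L p ≠ ⊤ →
      IsStat f' P₁ p₂' L p v := fun p v hv hp =>
    IsStat.of_mem_limSubdiff hfgrad hf' hP₁ hP₂conv hP₂grad hp₂' hv hp
  have hydist : ∀ p v, IsStat f' P₁ p₂' L p v → ‖p.snd.fst - p₂' p.fst‖ ≤ ℓ * ‖v.snd.fst‖ := by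
    intro p v h
    rw [h.2.1]
    simpa using hlip (p.fst + v.snd.fst) p.fst
  intro p₀ ⟨v₀, hv₀⟩
  by_cases htop : potE3 f P₁ P₂ L p₀ = ⊤
  · -- No value lies strictly above `⊤`, so the inequality is vacuous.
    refine ⟨1, one_pos, 1, one_pos, 1, one_pos, fun x _ h => ?_⟩
    rw [htop] at h
    exact absurd h not_top_lt
  have hst₀ := hstat p₀ v₀ hv₀ htop
  obtain ⟨⟨a₀, ha₀⟩, b₀, hb₀⟩ :=
    potE_finite (x := p₀.fst) (y := p₀.snd.fst) (w := p₀.snd.snd) hP₁.1 htop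
  by_cases hcase : p₀.snd.snd = p₀.fst ∧ p₀.snd.fst = p₂' p₀.fst
  · obtain ⟨hw, hy⟩ := hcase
    obtain ⟨C, hC, ε, hε, a, ha, HF⟩ := (hKL p₀.fst ⟨_, mem_limSubdiff_F hP₁.1 (hfgrad _)
      (hP₂grad _) (by rw [ha₀]; exact EReal.coe_ne_top _) hst₀.1⟩).quadratic_bound
    refine KLExpAt.of_quadratic_bound hbot
      (C := C * (2 + ℓ) ^ 2 + ℓ + 1 / (2 * L)) (by positivity) hε ha ?_
    intro p hp hpt hg0 hga v hv
    have hst := hstat p v hv hpt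
    obtain ⟨⟨a₁, ha₁⟩, b₁, hb₁⟩ :=
      potE_finite (x := p.fst) (y := p.snd.fst) (w := p.snd.snd) hP₁.1 hpt
    obtain ⟨n1, n2, n3⟩ := Trip.norm_le v
    have hE₀ : (potE3 f P₁ P₂ L p₀).toReal = f p₀.fst + a₀ - P₂ p₀.fst := by
      have e1 := potE_eq (f := f) (L := L) (w := p₀.snd.snd) ha₀ hb₀
      change potE3 f P₁ P₂ L p₀ = _ at e1
      have e2 := conjE_gradient hP₂conv (hP₂grad p₀.fst)
      rw [← hy, hb₀] at e2
      have e3 : b₀ = ⟪p₀.fst, p₀.snd.fst⟫ - P₂ p₀.fst := by exact_mod_cast e2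
      rw [e1, EReal.toReal_coe, e3, hw, sub_self, norm_zero]
      ring
    have hE : (potE3 f P₁ P₂ L p).toReal = (f p.fst + a₁ - P₂ p.fst)
        + (P₂ p.fst + b₁ - ⟪p.fst, p.snd.fst⟫) + L / 2 * ‖p.fst - p.snd.snd‖ ^ 2 := by
      have e1 := potE_eq (f := f) (L := L) (w := p.snd.snd) ha₁ hb₁
      change potE3 f P₁ P₂ L p = _ at e1
      rw [e1, EReal.toReal_coe]
      ring
    -- The Fenchel gap `P₂(x) + P₂*(y) - ⟨x, y⟩` lies between `0` and `ℓ‖η‖²`.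
    have hgap0 : 0 ≤ P₂ p.fst + b₁ - ⟪p.fst, p.snd.fst⟫ := by
      have e1 := le_conjE P₂ p.fst p.snd.fst
      rw [hb₁] at e1
      have e2 : ⟪p.fst, p.snd.fst⟫ - P₂ p.fst ≤ b₁ := by exact_mod_cast e1
      linarith
    have hgap : P₂ p.fst + b₁ - ⟪p.fst, p.snd.fst⟫ ≤ ℓ * ‖v‖ ^ 2 := by
      have e1 := conjE_gradient hP₂conv (hP₂grad (p.fst + v.snd.fst))
      rw [← hst.2.1, hb₁] at e1
      have e2 : b₁ = ⟪p.fst + v.snd.fst, p.snd.fst⟫ - P₂ (p.fst + v.snd.fst) := by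
        exact_mod_cast e1
      have e3 := hP₂conv.add_inner_le (hP₂grad p.fst) v.snd.fst
      have e4 := real_inner_le_norm (p.snd.fst - p₂' p.fst) v.snd.fst
      rw [inner_add_left, real_inner_comm p.snd.fst v.snd.fst] at e2
      rw [inner_sub_left] at e4
      have e5 : ‖p.snd.fst - p₂' p.fst‖ * ‖v.snd.fst‖ ≤ ℓ * ‖v‖ * ‖v‖ := by
        gcongr
        exact (hydist p v hst).trans (by gcongr)
      nlinarith
    have hζ : L / 2 * ‖p.fst - p.snd.snd‖ ^ 2 ≤ 1 / (2 * L) * ‖v‖ ^ 2 := by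
      have e1 : ‖v.snd.snd‖ = L * ‖p.fst - p.snd.snd‖ := by
        rw [hst.2.2, norm_smul, Real.norm_of_nonneg hL.le, norm_sub_rev]
      have e2 : L / 2 * ‖p.fst - p.snd.snd‖ ^ 2 = 1 / (2 * L) * ‖v.snd.snd‖ ^ 2 := by
        rw [e1]
        field_simp
      rw [e2]
      gcongr
    have hFgap : (f p.fst + a₁ - P₂ p.fst) - (f p₀.fst + a₀ - P₂ p₀.fst)
        ≤ C * (2 + ℓ) ^ 2 * ‖v‖ ^ 2 := by
      by_cases hpos : (f p.fst + a₁ - P₂ p.fst) - (f p₀.fst + a₀ - P₂ p₀.fst) ≤ 0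
      · exact hpos.trans (by positivity)
      push Not at hpos
      have hnn : 0 ≤ L / 2 * ‖p.fst - p.snd.snd‖ ^ 2 := by positivity
      have hFx : ((f p.fst : ℝ) : EReal) + P₁ p.fst - ((P₂ p.fst : ℝ) : EReal)
          = ((f p.fst + a₁ - P₂ p.fst : ℝ) : EReal) := by
        rw [ha₁]
        norm_cast
      have hFx₀ : ((f p₀.fst : ℝ) : EReal) + P₁ p₀.fst - ((P₂ p₀.fst : ℝ) : EReal)
          = ((f p₀.fst + a₀ - P₂ p₀.fst : ℝ) : EReal) := by
        rw [ha₀]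
        norm_cast
      have hu := mem_limSubdiff_F hP₁.1 (hfgrad p.fst) (hP₂grad p.fst)
        (by rw [ha₁]; exact EReal.coe_ne_top _) hst.1
      have hdist : ‖p.fst - p₀.fst‖ ≤ ε := (Trip.norm_le (p - p₀)).1.trans hp
      have key := HF p.fst hdist
      simp only [hFx, hFx₀, EReal.toReal_coe] at key
      have key2 := key (by exact_mod_cast (by linarith)) (by
        have : f p.fst + a₁ - P₂ p.fst < f p₀.fst + a₀ - P₂ p₀.fst + a := by linarith
        exact_mod_cast this) hpos _ hu
      refine key2.trans ?_
      have hnorm : ‖v.fst - f' p.fst + p.snd.fst - L • (p.fst - p.snd.snd) + f' p.fst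
          - p₂' p.fst‖ ≤ (2 + ℓ) * ‖v‖ := by
        have e1 : v.fst - f' p.fst + p.snd.fst - L • (p.fst - p.snd.snd) + f' p.fst
          - p₂' p.fst = v.fst + v.snd.snd + (p.snd.fst - p₂' p.fst) := by
          rw [hst.2.2]
          module
        rw [e1]
        have e2 := norm_add₃_le (a := v.fst) (b := v.snd.snd) (c := p.snd.fst - p₂' p.fst)
        have e3 : ‖p.snd.fst - p₂' p.fst‖ ≤ ℓ * ‖v‖ := (hydist p v hst).trans (by gcongr)
        linarith
      rw [mul_assoc, ← mul_pow]
      gcongr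
    rw [hE, hE₀]
    linarith
  · -- A residual vanishing exactly when the point satisfies the conditions of the other case.
    set ρ : Trip n → ℝ := fun p => L * ‖p.snd.snd - p.fst‖ + ‖p.snd.fst - p₂' p.fst‖ with hρ
    have c1 : Continuous (fun q : Trip n => q.fst) := WithLp.continuous_fst ..
    have c2 : Continuous (fun q : Trip n => q.snd.fst) :=
      (WithLp.continuous_fst ..).comp (WithLp.continuous_snd ..)
    have c3 : Continuous (fun q : Trip n => q.snd.snd) :=
      (WithLp.continuous_snd ..).comp (WithLp.continuous_snd ..)
    have hρc : Continuous ρ :=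
      ((c3.sub c1).norm.const_mul L).add (c2.sub (hp₂'.comp c1)).norm
    have hρ₀ : 0 < ρ p₀ := by
      by_contra! hle
      have n1 : 0 ≤ L * ‖p₀.snd.snd - p₀.fst‖ := by positivity
      have n2 : 0 ≤ ‖p₀.snd.fst - p₂' p₀.fst‖ := norm_nonneg _
      have hle' : L * ‖p₀.snd.snd - p₀.fst‖ + ‖p₀.snd.fst - p₂' p₀.fst‖ ≤ 0 := hle
      refine hcase ⟨?_, ?_⟩
      · have : L * ‖p₀.snd.snd - p₀.fst‖ = 0 := by linarith
        rcases mul_eq_zero.mp this with h | h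
        · exact absurd h hL.ne'
        · exact sub_eq_zero.mp (norm_eq_zero.mp h)
      · exact sub_eq_zero.mp (norm_eq_zero.mp (by linarith))
    obtain ⟨ε, hε, hball⟩ := Metric.nhds_basis_closedBall.eventually_iff.mp
      (hρc.continuousAt.eventually (lt_mem_nhds (half_lt_self hρ₀)))
    refine KLExpAt.of_quadratic_bound hbot (C := ((1 + ℓ) / (ρ p₀ / 2)) ^ 2) (by positivity) hε
      one_pos ?_
    intro p hp hpt hg0 hga v hv
    have hst := hstat p v hv hpt
    obtain ⟨n1, n2, n3⟩ := Trip.norm_le v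
    have h1 : ρ p₀ / 2 < ρ p := hball (by rwa [mem_closedBall, dist_eq_norm])
    have h2 : ρ p ≤ (1 + ℓ) * ‖v‖ := by
      have e1 : ‖v.snd.snd‖ = L * ‖p.snd.snd - p.fst‖ := by
        rw [hst.2.2, norm_smul, Real.norm_of_nonneg hL.le]
      have e3 : ‖p.snd.fst - p₂' p.fst‖ ≤ ℓ * ‖v‖ := (hydist p v hst).trans (by gcongr)
      change L * ‖p.snd.snd - p.fst‖ + ‖p.snd.fst - p₂' p.fst‖ ≤ _
      linarith
    have h3 : 1 ≤ (1 + ℓ) / (ρ p₀ / 2) * ‖v‖ := by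
      rw [div_mul_eq_mul_div, le_div_iff₀ (by positivity)]
      linarith
    rw [← mul_pow]
    exact hga.le.trans (one_le_pow₀ h3)
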